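/- arXiv:math/0701627 — 7 statements merged into one kernel-verified Lean document; each statement's English description precedes it below -/
import Mathlib

section
/- Let N be the set of nilpotent elements of S and N* = N \ {0}. If N* is nonempty, then the subgraph of Γ(S) induced on N* is connected and has diameter at most 2. -/
/-!
Given nonzero nilpotents `x` and `y`, take the last nonzero power `w` of `x`, and then the last
nonzero element `b` of the sequence `w`, `y * w`, `y * (y * w)`, …. Both `x` and `y` annihilate `b`,
and `b * b = 0` because `b` is `x` itself or a multiple of it. Hence `b` is a nilpotent vertex that
is equal or adjacent to each of `x` and `y`.
-/

/-- A commutative semigroup with a zero element. -/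
class CommSemigroupWithZero (S : Type*) extends SemigroupWithZero S where
  mul_comm : ∀ a b : S, a * b = b * a

variable (S : Type*) [CommSemigroupWithZero S]

/-- The set of zero-divisors of `S`. -/
def zdivs : Set S := {x | ∃ y, y ≠ 0 ∧ x * y = 0}

/-- The vertex set `Z(S)* = Z(S) \ {0}` of the zero-divisor graph. -/
def zdVerts : Set S := {x | x ≠ 0 ∧ x ∈ zdivs S}

/-- The zero-divisor graph `Γ(S)`. -/
def zdGraph : SimpleGraph (zdVerts S) where
  Adj x y := x ≠ y ∧ (x : S) * y = 0
  symm := by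
    constructor
    rintro x y ⟨hne, h⟩
    exact ⟨hne.symm, by rw [CommSemigroupWithZero.mul_comm]; exact h⟩
  loopless := ⟨fun x h => h.1 rfl⟩

/-- `I` is an ideal of the semigroup `S`. -/
def IsIdeal (I : Set S) : Prop := I.Nonempty ∧ ∀ x ∈ I, ∀ s : S, x * s ∈ I

/-- `p` is a prime ideal of the semigroup `S`. -/
def IsPrimeIdeal (p : Set S) : Prop :=
  IsIdeal S p ∧ ∀ x y : S, (∀ s : S, x * s * y ∈ p) → x ∈ p ∨ y ∈ p

/-- `x` is nilpotent: `x ^ (n + 1) = 0` for some `n`. -/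
def IsNil (x : S) : Prop := ∃ n : ℕ, (fun y => x * y)^[n] x = 0

/-- The annihilator of `a`. -/
def Ann (a : S) : Set S := {s | s * a = 0}

/-- The set of associated primes of `S`. -/
def Ass : Set (Set S) := {p | IsPrimeIdeal S p ∧ ∃ x : S, p = Ann S x}

section Semigroup

variable {M : Type*}

theorem iterate_mul_left_mul [Semigroup M] (x a b : M) (n : ℕ) :
    (x * ·)^[n] a * b = (x * ·)^[n] (a * b) :=
  Function.Semiconj.iterate_right (f := (· * b)) (fun c => mul_assoc x c b) n a

theorem iterate_mul_left_mul_eq_zero [SemigroupWithZero M] {a b : M} (h : a * b = 0) (x : M)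
    (n : ℕ) : (x * ·)^[n] a * b = 0 := by
  rw [iterate_mul_left_mul, h, Function.iterate_fixed (mul_zero x)]

end Semigroup

instance CommSemigroupWithZero.toCommSemigroup : CommSemigroup S where
  mul_comm := CommSemigroupWithZero.mul_comm

section Nilpotent

variable {S}

theorem IsNil.of_mul_self_eq_zero {x : S} (h : x * x = 0) : IsNil S x := ⟨1, h⟩

theorem IsNil.exists_last_iterate_ne_zero {x a : S} (hx : IsNil S x) (ha : a ≠ 0) :
    ∃ n : ℕ, (x * ·)^[n] a ≠ 0 ∧ x * (x * ·)^[n] a = 0 := by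
  obtain ⟨m, hm⟩ := hx
  have iterate_eq_zero : (x * ·)^[m + 1] a = 0 := by
    rw [Function.iterate_succ_apply, ← iterate_mul_left_mul, hm, zero_mul]
  simp only [← Function.iterate_succ_apply' (x * ·)]
  exact Nat.exists_not_and_succ_of_not_zero_of_exists ha ⟨m + 1, iterate_eq_zero⟩

theorem IsNil.mem_zdVerts {x : S} (hx : IsNil S x) (hx0 : x ≠ 0) : x ∈ zdVerts S :=
  have ⟨_, hpow, hmul⟩ := hx.exists_last_iterate_ne_zero hx0
  ⟨hx0, _, hpow, hmul⟩

theorem IsNil.exists_sq_zero_common_annihilator {x y : S} (hx : IsNil S x) (hx0 : x ≠ 0)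
    (hy : IsNil S y) : ∃ b : S, b ≠ 0 ∧ b * b = 0 ∧ x * b = 0 ∧ b * y = 0 := by
  obtain ⟨m, hw, hxw⟩ := hx.exists_last_iterate_ne_zero hx0
  obtain ⟨n, hb, hyb⟩ := hy.exists_last_iterate_ne_zero hw
  set w := (x * ·)^[m] x
  set b := (y * ·)^[n] w
  have hxb : x * b = 0 := by
    rw [mul_comm] at hxw ⊢
    exact iterate_mul_left_mul_eq_zero hxw y n
  have hwb : w * b = 0 := iterate_mul_left_mul_eq_zero hxb x m
  have hbb : b * b = 0 := iterate_mul_left_mul_eq_zero hwb y n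
  exact ⟨b, hb, hbb, hxb, by rwa [mul_comm]⟩

end Nilpotent

/-- The subgraph of the zero-divisor graph `Γ(S)` induced on the set `N*` of nonzero nilpotent
elements; being nonzero is part of being a vertex of `Γ(S)`. -/
abbrev nilGraph : SimpleGraph {v : zdVerts S | IsNil S v.val} :=
  (zdGraph S).induce {v : zdVerts S | IsNil S v.val}

theorem edist_nilGraph_le_one {u v : {v : zdVerts S | IsNil S v.val}}
    (h : (u.val : S) * v.val = 0) : (nilGraph S).edist u v ≤ 1 := by
  rw [SimpleGraph.edist_le_one_iff_adj_or_eq, or_iff_not_imp_right]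
  exact fun huv => ⟨fun heq => huv (Subtype.ext heq), h⟩

theorem ediam_nilGraph_le_two : (nilGraph S).ediam ≤ 2 := by
  refine SimpleGraph.ediam_le_of_edist_le fun u v => ?_
  obtain ⟨b, hb, hbb, hub, hbv⟩ := u.2.exists_sq_zero_common_annihilator u.val.2.1 v.2
  have hb_nil : IsNil S b := .of_mul_self_eq_zero hbb
  let z : {v : zdVerts S | IsNil S v.val} := ⟨⟨b, hb_nil.mem_zdVerts hb⟩, hb_nil⟩
  calc (nilGraph S).edist u v
      ≤ (nilGraph S).edist u z + (nilGraph S).edist z v := SimpleGraph.edist_triangle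
    _ ≤ 1 + 1 := add_le_add (edist_nilGraph_le_one S hub) (edist_nilGraph_le_one S hbv)
    _ = 2 := one_add_one_eq_two

/-- If the set `N* = N \ {0}` of nonzero nilpotent elements of `S` is
nonempty, then the subgraph of `Γ(S)` induced on `N*` is connected and has diameter
at most `2`. -/
theorem nilpotent_induced_connected_diam_le_two
    (hne : ∃ x : S, x ≠ 0 ∧ IsNil S x) :
    ((zdGraph S).induce {v : zdVerts S | IsNil S v.val}).Connected ∧
      ∀ u v : {v : zdVerts S | IsNil S v.val},
        ((zdGraph S).induce {v : zdVerts S | IsNil S v.val}).dist u v ≤ 2 := by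
  obtain ⟨x, hx0, hx⟩ := hne
  have : Nonempty {v : zdVerts S | IsNil S v.val} := ⟨⟨⟨x, hx.mem_zdVerts hx0⟩, hx⟩⟩
  have ediam_le : (nilGraph S).ediam ≤ 2 := ediam_nilGraph_le_two S
  have ediam_ne_top : (nilGraph S).ediam ≠ ⊤ := ne_top_of_le_ne_top (ENat.natCast_ne_top 2) ediam_le
  exact ⟨SimpleGraph.connected_of_ediam_ne_top ediam_ne_top, fun u v =>
    (SimpleGraph.dist_le_diam ediam_ne_top).trans (ENat.toNat_le_of_le_natCast ediam_le)⟩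
end

section
/- Assume Z(S)* is finite and nonempty. Let M be the set of vertices v of Γ(S) for which the distance sum d(v) = Σ_{z ∈ Z(S)*} d(v,z) is minimum (the vertex set of the median of Γ(S)). Then M ∪ {0} is an ideal of S. -/
variable (S : Type*) [CommSemigroupWithZero S]

/-!
If `Ann x ⊆ Ann y`, every neighbour of `x` is equal or adjacent to `y`, so a walk from `x` to a
vertex other than `x` can be rerouted to start at `y` without becoming longer: `d(y, z) ≤ d(x, z)`
for every `z ≠ x`. Comparing the two distance sums after exchanging the roles of `x` and `y` gives
`d(y) ≤ d(x)`. Since `Ann x ⊆ Ann (x * s)`, a nonzero multiple of a vertex of the median is again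
in the median.
-/

section Graph

variable {V : Type*} {G : SimpleGraph V} {x y z : V}

/-- The distance sum `d(v) = ∑ z, d(v, z)` of a vertex `v`. As `SimpleGraph.dist` is `0` between
vertices in different components, it is meaningful only for connected graphs. -/
noncomputable def distSum [Fintype V] (G : SimpleGraph V) (v : V) : ℕ := ∑ z, G.dist v z

/-- The vertex set of the median of a finite graph: the vertices of minimum distance sum. -/
def medianVerts [Fintype V] (G : SimpleGraph V) : Set V := {v | ∀ u, distSum G v ≤ distSum G u}

theorem dist_le_length_of_neighborSet_subset (h : G.neighborSet x ⊆ insert y (G.neighborSet y))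
    (hzx : z ≠ x) (p : G.Walk x z) : G.dist y z ≤ p.length := by
  cases p with
  | nil => exact absurd rfl hzx
  | cons hxw q =>
    rw [SimpleGraph.Walk.length_cons]
    rcases h hxw with rfl | hyw
    · exact (SimpleGraph.dist_le q).trans (Nat.le_succ _)
    · exact SimpleGraph.dist_le (.cons hyw q)

theorem dist_le_dist_of_neighborSet_subset (h : G.neighborSet x ⊆ insert y (G.neighborSet y))
    (hxz : G.Reachable x z) (hzx : z ≠ x) : G.dist y z ≤ G.dist x z := by
  obtain ⟨p, hp⟩ := hxz.exists_walk_length_eq_dist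
  exact hp ▸ dist_le_length_of_neighborSet_subset h hzx p

theorem distSum_le_of_neighborSet_subset [Fintype V] (hG : G.Preconnected)
    (h : G.neighborSet x ⊆ insert y (G.neighborSet y)) : distSum G y ≤ distSum G x := by
  classical
  -- The bound on distances fails at `z = x`; swapping `x` and `y` pairs `d(y, x)` with `d(x, y)`.
  have dist_le_dist_swap (z : V) : G.dist y z ≤ G.dist x (Equiv.swap x y z) := by
    by_cases hzx : z = x
    · rw [hzx, Equiv.swap_apply_left, SimpleGraph.dist_comm]
    by_cases hzy : z = y
    · rw [hzy, SimpleGraph.dist_self]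
      exact Nat.zero_le _
    rw [Equiv.swap_apply_of_ne_of_ne hzx hzy]
    exact dist_le_dist_of_neighborSet_subset h (hG x z) hzx
  calc
    distSum G y ≤ ∑ z, G.dist x (Equiv.swap x y z) :=
      Finset.sum_le_sum fun z _ => dist_le_dist_swap z
    _ = distSum G x := Equiv.sum_comp (Equiv.swap x y) (G.dist x)

theorem mem_medianVerts_of_neighborSet_subset [Fintype V] (hG : G.Preconnected)
    (h : G.neighborSet x ⊆ insert y (G.neighborSet y)) (hx : x ∈ medianVerts G) :
    y ∈ medianVerts G :=
  fun u => (distSum_le_of_neighborSet_subset hG h).trans (hx u)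

end Graph

section ZeroDivisorGraph

variable {S}

theorem mul_eq_zero_symm {a b : S} (h : a * b = 0) : b * a = 0 :=
  CommSemigroupWithZero.mul_comm b a ▸ h

theorem mul_mem_zdivs {x : S} (hx : x ∈ zdivs S) (s : S) : x * s ∈ zdivs S := by
  obtain ⟨a, ha, hxa⟩ := hx
  refine ⟨a, ha, ?_⟩
  rw [CommSemigroupWithZero.mul_comm x s, mul_assoc, hxa, mul_zero]

theorem zdGraph_reachable_of_mul_eq_zero {x y : zdVerts S} (h : (x : S) * y = 0) :
    (zdGraph S).Reachable x y := by
  by_cases hxy : x = y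
  · exact hxy ▸ .rfl
  · exact SimpleGraph.Adj.reachable ⟨hxy, h⟩

variable (S) in
theorem zdGraph_preconnected : (zdGraph S).Preconnected := by
  intro x y
  obtain ⟨a, ha, hxa⟩ := x.2.2
  obtain ⟨b, hb, hyb⟩ := y.2.2
  let a' : zdVerts S := ⟨a, ha, x, x.2.1, mul_eq_zero_symm hxa⟩
  let b' : zdVerts S := ⟨b, hb, y, y.2.1, mul_eq_zero_symm hyb⟩
  have hxa' : (zdGraph S).Reachable x a' := zdGraph_reachable_of_mul_eq_zero hxa
  have hby' : (zdGraph S).Reachable b' y := zdGraph_reachable_of_mul_eq_zero (mul_eq_zero_symm hyb)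
  by_cases hab : a * b = 0
  · have hab' : (zdGraph S).Reachable a' b' := zdGraph_reachable_of_mul_eq_zero hab
    exact hxa'.trans (hab'.trans hby')
  · let c : zdVerts S := ⟨a * b, hab, mul_mem_zdivs a'.2.2 b⟩
    have hxc : (x : S) * c = 0 := by rw [← mul_assoc, hxa, zero_mul]
    have hcy : (c : S) * y = 0 := by rw [mul_assoc, mul_eq_zero_symm hyb, mul_zero]
    exact (zdGraph_reachable_of_mul_eq_zero hxc).trans (zdGraph_reachable_of_mul_eq_zero hcy)

theorem zdGraph_neighborSet_subset_of_ann_subset {x y : zdVerts S} (h : Ann S (x : S) ⊆ Ann S y) :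
    (zdGraph S).neighborSet x ⊆ insert y ((zdGraph S).neighborSet y) := by
  rintro w ⟨-, hxw⟩
  by_cases hwy : w = y
  · exact .inl hwy
  · exact .inr ⟨Ne.symm hwy, mul_eq_zero_symm (h (mul_eq_zero_symm hxw))⟩

theorem ann_subset_ann_mul (x s : S) : Ann S x ⊆ Ann S (x * s) := by
  intro a (ha : a * x = 0)
  change a * (x * s) = 0
  rw [← mul_assoc, ha, zero_mul]

end ZeroDivisorGraph

/-- If `Z(S)*` is finite and nonempty, then the vertex set of the
median of `Γ(S)` (the vertices with minimum distance sum), together with `0`,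
is an ideal of `S`. -/
theorem median_union_zero_isIdeal [Fintype (zdVerts S)] (hne : (zdVerts S).Nonempty) :
    IsIdeal S
      ({x : S | ∃ hx : x ∈ zdVerts S, ∀ u : zdVerts S,
          (∑ z : zdVerts S, (zdGraph S).dist ⟨x, hx⟩ z) ≤
            ∑ z : zdVerts S, (zdGraph S).dist u z} ∪ {0}) := by
  refine ⟨⟨0, .inr rfl⟩, ?_⟩
  rintro x (⟨hx, hmin⟩ | rfl) s
  · by_cases hxs : x * s = 0
    · exact .inr hxs
    have hxs_vert : x * s ∈ zdVerts S := ⟨hxs, mul_mem_zdivs hx.2 s⟩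
    have hx_med : (⟨x, hx⟩ : zdVerts S) ∈ medianVerts (zdGraph S) := hmin
    have hxs_med : (⟨x * s, hxs_vert⟩ : zdVerts S) ∈ medianVerts (zdGraph S) :=
      mem_medianVerts_of_neighborSet_subset (zdGraph_preconnected S)
        (zdGraph_neighborSet_subset_of_ann_subset (ann_subset_ann_mul x s)) hx_med
    exact .inl ⟨hxs_vert, hxs_med⟩
  · exact .inr (zero_mul s)
end

section
/- If T is a minimal cut vertex set of Γ(S), i.e. deleting the vertices of T from Γ(S) yields a disconnected graph but deleting any proper subset of T does not, then T ∪ {0} is an ideal of S. -/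
variable (S : Type*) [CommSemigroupWithZero S]

/-!
A nonzero multiple `x * s` of a vertex `x` annihilates everything that `x` annihilates, so in `Γ(S)`
it is adjacent to every neighbour of `x` other than itself. Paths through `x` can therefore be
rerouted through `x * s`, so deleting `x` from a connected induced subgraph that contains `x * s`
leaves it connected. If `x` lay in a minimal cut vertex set `T` and `x * s ≠ 0` did not, passing
from `T \ {x}` to `T` would be such a deletion.
-/

section Connectivity

variable {V W : Type*} {G : SimpleGraph V}

theorem connected_of_surjective_of_adj_reachable {H : SimpleGraph W} {f : V → W}
    (hf : Function.Surjective f) (hadj : ∀ a b, G.Adj a b → H.Reachable (f a) (f b))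
    (hG : G.Connected) : H.Connected := by
  have hreach {a b : V} (hab : G.Reachable a b) : H.Reachable (f a) (f b) := by
    rw [SimpleGraph.reachable_iff_reflTransGen] at hab ⊢
    exact hab.lift' f fun a b h ↦ (SimpleGraph.reachable_iff_reflTransGen _ _).1 (hadj a b h)
  have : Nonempty W := hG.nonempty.map f
  exact ⟨hf.forall₂.2 fun a b ↦ hreach (hG.preconnected a b)⟩

theorem connected_induce_of_connected_induce_insert {s : Set V} {x v : V} (hv : v ∈ s)
    (hdom : ∀ a ∈ s, G.Adj x a → a ≠ v → G.Adj v a) (hG : (G.induce (insert x s)).Connected) :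
    (G.induce s).Connected := by
  classical
  let retract (a : ↥(insert x s)) : s := if ha : a.1 ∈ s then ⟨a, ha⟩ else ⟨v, hv⟩
  have retract_of_mem (a : ↥(insert x s)) (ha : a.1 ∈ s) : retract a = ⟨a, ha⟩ := dif_pos ha
  have retract_of_notMem (a : ↥(insert x s)) (ha : a.1 ∉ s) : retract a = ⟨v, hv⟩ := dif_neg ha
  have eq_of_notMem (a : ↥(insert x s)) (ha : a.1 ∉ s) : a.1 = x := a.2.resolve_right ha
  have reachable_of_adj {a : V} (ha : a ∈ s) (h : G.Adj x a) :
      (G.induce s).Reachable ⟨v, hv⟩ ⟨a, ha⟩ := by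
    by_cases hav : a = v
    · subst hav
      rfl
    · exact SimpleGraph.Adj.reachable (hdom a ha h hav)
  refine connected_of_surjective_of_adj_reachable (f := retract)
    (fun a ↦ ⟨⟨a, .inr a.2⟩, retract_of_mem _ a.2⟩) (fun a b hab ↦ ?_) hG
  replace hab : G.Adj a.1 b.1 := hab
  by_cases ha : a.1 ∈ s <;> by_cases hb : b.1 ∈ s
  · rw [retract_of_mem a ha, retract_of_mem b hb]
    exact SimpleGraph.Adj.reachable hab
  · rw [retract_of_mem a ha, retract_of_notMem b hb]
    rw [eq_of_notMem b hb] at hab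
    exact (reachable_of_adj ha hab.symm).symm
  · rw [retract_of_notMem a ha, retract_of_mem b hb]
    rw [eq_of_notMem a ha] at hab
    exact reachable_of_adj hb hab
  · rw [retract_of_notMem a ha, retract_of_notMem b hb]

theorem mem_of_not_connected_induce_compl {T : Set V} {x v : V}
    (hT : ¬ (G.induce Tᶜ).Connected) (hTx : (G.induce (T \ {x})ᶜ).Connected)
    (hdom : ∀ a ∉ T, G.Adj x a → a ≠ v → G.Adj v a) : v ∈ T := by
  rw [Set.compl_sdiff, Set.singleton_union] at hTx
  by_contra hv
  exact hT (connected_induce_of_connected_induce_insert hv hdom hTx)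

end Connectivity

section ZeroDivisorGraph

variable {S}

theorem mul_mul_eq_zero_of_mul_eq_zero {x y : S} (hxy : x * y = 0) (s : S) : x * s * y = 0 := by
  rw [mul_assoc, CommSemigroupWithZero.mul_comm s y, ← mul_assoc, hxy, zero_mul]

theorem mul_mem_zdVerts {x s : S} (hx : x ∈ zdVerts S) (hxs : x * s ≠ 0) : x * s ∈ zdVerts S := by
  obtain ⟨-, y, hy, hxy⟩ := hx
  exact ⟨hxs, y, hy, mul_mul_eq_zero_of_mul_eq_zero hxy s⟩

theorem zdGraph_adj_of_coe_eq_mul {x v a : zdVerts S} {s : S} (hv : (v : S) = x * s)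
    (hxa : (zdGraph S).Adj x a) (hav : a ≠ v) : (zdGraph S).Adj v a :=
  ⟨hav.symm, hv ▸ mul_mul_eq_zero_of_mul_eq_zero hxa.2 s⟩

end ZeroDivisorGraph

/-- If `T` is a minimal cut vertex set of `Γ(S)` (deleting the
vertices of `T` disconnects `Γ(S)`, but deleting any proper subset of `T` does not),
then `T ∪ {0}` is an ideal of `S`. -/
theorem minimal_cut_vertex_set_union_zero_isIdeal (T : Set (zdVerts S))
    (hdisc : ¬ ((zdGraph S).induce Tᶜ).Connected)
    (hmin : ∀ T' : Set (zdVerts S), T' ⊂ T → ((zdGraph S).induce T'ᶜ).Connected) :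
    IsIdeal S ((Subtype.val '' T) ∪ {0}) := by
  refine ⟨⟨0, .inr rfl⟩, ?_⟩
  rintro _ (⟨x, hxT, rfl⟩ | rfl) s
  · by_cases hxs : (x : S) * s = 0
    · exact .inr hxs
    · let v : zdVerts S := ⟨x * s, mul_mem_zdVerts x.2 hxs⟩
      have hconn := hmin (T \ {x}) (Set.sdiff_singleton_ssubset.2 hxT)
      have hvT : v ∈ T := mem_of_not_connected_induce_compl hdisc hconn
        fun _ _ ↦ zdGraph_adj_of_coe_eq_mul rfl
      exact .inl ⟨v, hvT, rfl⟩
  · exact .inr (zero_mul s)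
end

section
/- Let e = xy be a bridge of Γ(S) (an edge whose removal disconnects Γ(S)) such that each of the two connected components of Γ(S) − e has at least two vertices. Then Sx = {0, x} and Sy = {0, y}, where Sx = {s·x : s ∈ S}; in particular {0,x} and {0,y} are ideals of S. -/
variable (S : Type*) [CommSemigroupWithZero S]

/-!
The elements of `S` that annihilate `x` also annihilate every multiple `s * x`. Let `a ≠ y` be a
further neighbour of `x`. If `c = s * x` is neither `0` nor `x`, then `c` annihilates both `a` and
`y`, and `x - a - c - y` (where possibly `c = a` or `c = y`) joins `x` to `y` without using the
bridge `xy`. Hence `Sx ⊆ {0, x}`. The value `x` is attained at a neighbour `b ≠ x` of `y`: if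
`b * x = 0`, then `xy` would lie in the triangle `x, y, b`.
-/

section

variable {S}

theorem isIdeal_range_mul_right (x : S) : IsIdeal S (Set.range fun s : S => s * x) := by
  refine ⟨⟨0 * x, 0, rfl⟩, ?_⟩
  rintro _ ⟨s, rfl⟩ t
  exact ⟨t * s, (mul_assoc t s x).trans (CommSemigroupWithZero.mul_comm t (s * x))⟩

theorem reachable_deleteEdges_of_mul_eq_zero {u v : zdVerts S} {E : Set (Sym2 (zdVerts S))}
    (huv : (u : S) * v = 0) (hE : s(u, v) ∉ E) :
    ((zdGraph S).deleteEdges E).Reachable u v := by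
  by_cases h : u = v
  · exact h ▸ .refl u
  · have hadj : (zdGraph S).Adj u v := ⟨h, huv⟩
    exact (SimpleGraph.deleteEdges_adj.mpr ⟨hadj, hE⟩).reachable

variable {x y a b : zdVerts S}

theorem mul_ne_zero_of_isBridge (hbr : (zdGraph S).IsBridge s(x, y))
    (hyb : ((zdGraph S).deleteEdges {s(x, y)}).Adj y b) : (x : S) * b ≠ 0 := by
  intro hxb
  have x_to_b : ((zdGraph S).deleteEdges {s(x, y)}).Reachable x b :=
    reachable_deleteEdges_of_mul_eq_zero hxb fun h => hyb.ne' (Sym2.congr_right.mp h)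
  exact hbr (x_to_b.trans hyb.symm.reachable)

theorem mul_eq_zero_or_eq_right_of_isBridge (hbr : (zdGraph S).IsBridge s(x, y))
    (hxy : (x : S) * y = 0) (hxa : ((zdGraph S).deleteEdges {s(x, y)}).Adj x a) (s : S) :
    s * (x : S) = 0 ∨ s * (x : S) = x := by
  by_contra! ⟨hsx_zero, hsx_ne⟩
  have hsx_mul {z : S} (hz : (x : S) * z = 0) : s * (x : S) * z = 0 := by
    rw [mul_assoc, hz, mul_zero]
  let c : zdVerts S := ⟨s * x, hsx_zero, y, y.2.1, hsx_mul hxy⟩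
  have hcx : c ≠ x := fun h => hsx_ne (congrArg Subtype.val h)
  have hay : a ≠ y := fun h => hbr (h ▸ hxa.reachable)
  have c_to_a : ((zdGraph S).deleteEdges {s(x, y)}).Reachable c a :=
    reachable_deleteEdges_of_mul_eq_zero (hsx_mul (SimpleGraph.deleteEdges_adj.mp hxa).1.2)
      (by simp [hcx, hxa.ne', hay])
  have c_to_y : ((zdGraph S).deleteEdges {s(x, y)}).Reachable c y :=
    reachable_deleteEdges_of_mul_eq_zero (hsx_mul hxy) fun h => hcx (Sym2.congr_left.mp h)
  exact hbr (hxa.reachable.trans (c_to_a.symm.trans c_to_y))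

theorem range_mul_right_eq_pair_of_isBridge (hbr : (zdGraph S).IsBridge s(x, y))
    (hxy : (x : S) * y = 0) (hxa : ((zdGraph S).deleteEdges {s(x, y)}).Adj x a)
    (hyb : ((zdGraph S).deleteEdges {s(x, y)}).Adj y b) :
    Set.range (fun s : S => s * (x : S)) = {0, (x : S)} := by
  have hsub := mul_eq_zero_or_eq_right_of_isBridge hbr hxy hxa
  have hbx_ne : (b : S) * x ≠ 0 :=
    CommSemigroupWithZero.mul_comm (x : S) b ▸ mul_ne_zero_of_isBridge hbr hyb
  have hbx : (b : S) * x = x := (hsub b).resolve_left hbx_ne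
  refine Set.Subset.antisymm (Set.range_subset_iff.mpr hsub) ?_
  exact Set.pair_subset ⟨0, zero_mul _⟩ ⟨b, hbx⟩

end

/-- If `e = xy` is a bridge of `Γ(S)` such that each of the two
connected components of `Γ(S) − e` (the components of `x` and of `y`) has at least two
vertices, then `Sx = {0, x}` and `Sy = {0, y}`; in particular `{0, x}` and `{0, y}`
are ideals of `S`. -/
theorem bridge_big_components (x y : zdVerts S)
    (hbr : s(x, y) ∈ (zdGraph S).edgeSet ∧ (zdGraph S).IsBridge s(x, y))
    (hx2 : ∃ u : zdVerts S, u ≠ x ∧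
      ((zdGraph S) \ SimpleGraph.fromEdgeSet {s(x, y)}).Reachable x u)
    (hy2 : ∃ u : zdVerts S, u ≠ y ∧
      ((zdGraph S) \ SimpleGraph.fromEdgeSet {s(x, y)}).Reachable y u) :
    (Set.range (fun s : S => s * (x : S)) = {0, (x : S)}) ∧
    (Set.range (fun s : S => s * (y : S)) = {0, (y : S)}) ∧
    IsIdeal S {0, (x : S)} ∧ IsIdeal S {0, (y : S)} := by
  obtain ⟨hadj, hbr⟩ := hbr
  obtain ⟨u, hux, hxu⟩ := hx2
  obtain ⟨v, hvy, hyv⟩ := hy2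
  obtain ⟨a, hxa⟩ := hxu.nonempty_neighborSet_left hux.symm
  obtain ⟨b, hyb⟩ := hyv.nonempty_neighborSet_left hvy.symm
  have hSx := range_mul_right_eq_pair_of_isBridge hbr hadj.2 hxa hyb
  have hSy : Set.range (fun s : S => s * (y : S)) = {0, (y : S)} := by
    rw [Sym2.eq_swap] at hadj hbr hxa hyb
    exact range_mul_right_eq_pair_of_isBridge hbr hadj.2 hyb hxa
  exact ⟨hSx, hSy, hSx ▸ isIdeal_range_mul_right (x : S), hSy ▸ isIdeal_range_mul_right (y : S)⟩
end

section
/- Let S be a reduced commutative semigroup with zero such that Γ(S) contains no infinite clique. Then S satisfies the ascending chain condition on annihilators: there is no strictly increasing sequence Ann(x₁) ⊊ Ann(x₂) ⊊ Ann(x₃) ⊊ ⋯ of annihilators of elements of S. -/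
variable (S : Type*) [CommSemigroupWithZero S]

theorem injective_of_pairwise_mul_eq_zero {M ι : Type*} [Mul M] [Zero M] {f : ι → M}
    (hsq : ∀ i, f i * f i ≠ 0) (hf : Pairwise fun i j => f i * f j = 0) :
    Function.Injective f := by
  intro i j hij
  by_contra hne
  have hmul : f i * f j = 0 := hf hne
  exact hsq i (by rwa [← hij] at hmul)

section

variable {S} {ι : Type*}

theorem isNil_of_mul_self_eq_zero {x : S} (hx : x * x = 0) : IsNil S x :=
  ⟨1, hx⟩

theorem mul_mul_mul_eq_zero_of_mem_Ann {a y : S} (ha : a ∈ Ann S y) (x b : S) :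
    a * x * (b * y) = 0 :=
  calc a * x * (b * y) = a * y * (x * b) := by rw [mul_comm b y, mul_mul_mul_comm]
    _ = 0 := by rw [show a * y = 0 from ha, zero_mul]

theorem zdGraph_isClique_iff {T : Set (zdVerts S)} :
    (zdGraph S).IsClique T ↔ T.Pairwise fun x y => (x : S) * y = 0 :=
  ⟨fun hT _ hx _ hy hne => (hT hx hy hne).2, fun hT _ hx _ hy hne => ⟨hne, hT hx hy hne⟩⟩

theorem mem_zdVerts_of_pairwise_mul_eq_zero [Nontrivial ι] {f : ι → S} (hne : ∀ i, f i ≠ 0)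
    (hf : Pairwise fun i j => f i * f j = 0) (i : ι) : f i ∈ zdVerts S := by
  obtain ⟨j, hji⟩ := exists_ne i
  exact ⟨hne i, f j, hne j, hf hji.symm⟩

theorem finite_of_pairwise_mul_eq_zero
    (hclique : ∀ T : Set (zdVerts S), (zdGraph S).IsClique T → T.Finite) {f : ι → S}
    (hsq : ∀ i, f i * f i ≠ 0) (hf : Pairwise fun i j => f i * f j = 0) : Finite ι := by
  rw [← not_infinite_iff_finite]
  intro _
  have hne (i : ι) : f i ≠ 0 := left_ne_zero_of_mul (hsq i)
  let v (i : ι) : zdVerts S := ⟨f i, mem_zdVerts_of_pairwise_mul_eq_zero hne hf i⟩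
  have hinj : Function.Injective v := fun _ _ hij =>
    injective_of_pairwise_mul_eq_zero hsq hf (congrArg Subtype.val hij)
  have hrange : (zdGraph S).IsClique (Set.range v) :=
    zdGraph_isClique_iff.mpr (Pairwise.range_pairwise hf)
  exact Set.infinite_range_of_injective hinj (hclique _ hrange)

theorem exists_pairwise_mul_eq_zero_of_strictMono_Ann [LinearOrder ι] [SuccOrder ι] [NoMaxOrder ι]
    {x : ι → S} (hx : StrictMono fun i => Ann S (x i)) :
    ∃ y : ι → S, (∀ i, y i ≠ 0) ∧ Pairwise fun i j => y i * y j = 0 := by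
  have hgap (i : ι) : ∃ a ∈ Ann S (x (Order.succ i)), a ∉ Ann S (x i) :=
    Set.exists_of_ssubset (hx (Order.lt_succ i))
  choose a ha_succ ha using hgap
  have hlt {i j : ι} (hij : i < j) : a i * x i * (a j * x j) = 0 :=
    mul_mul_mul_eq_zero_of_mem_Ann (hx.monotone (Order.succ_le_of_lt hij) (ha_succ i)) _ _
  refine ⟨fun i => a i * x i, ha, fun i j hne => ?_⟩
  rcases hne.lt_or_gt with hij | hji
  · exact hlt hij
  · exact (mul_comm _ _).trans (hlt hji)

end

/-- If `S` is reduced and `Γ(S)` contains no infinite clique, then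
`S` satisfies the ascending chain condition on annihilators. -/
theorem acc_on_annihilators
    (hred : ∀ x : S, IsNil S x → x = 0)
    (hclique : ∀ T : Set (zdVerts S), (zdGraph S).IsClique T → T.Finite) :
    ¬ ∃ x : ℕ → S, ∀ n : ℕ, Ann S (x n) ⊂ Ann S (x (n + 1)) := by
  rintro ⟨x, hx⟩
  obtain ⟨y, hne, hy⟩ :=
    exists_pairwise_mul_eq_zero_of_strictMono_Ann (x := x) (strictMono_nat_of_lt_succ hx)
  have hsq (n : ℕ) : y n * y n ≠ 0 := fun h => hne n (hred _ (isNil_of_mul_self_eq_zero h))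
  have : Finite ℕ := finite_of_pairwise_mul_eq_zero hclique hsq hy
  exact not_finite ℕ
end

section
/- Let x, y ∈ S be such that p = Ann(x) and q = Ann(y) are two distinct prime ideals of S. Then x·y = 0. -/
variable (S : Type*) [CommSemigroupWithZero S]

section

variable {S}

theorem isIdeal_ann (a : S) : IsIdeal S (Ann S a) := by
  refine ⟨⟨0, zero_mul a⟩, fun s (hs : s * a = 0) t => ?_⟩
  calc s * t * a = t * (s * a) := by rw [CommSemigroupWithZero.mul_comm s t, mul_assoc]
    _ = 0 := by rw [hs, mul_zero]

theorem IsIdeal.zero_mem {I : Set S} (hI : IsIdeal S I) : 0 ∈ I := by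
  obtain ⟨x, hx⟩ := hI.1
  simpa only [mul_zero] using hI.2 x hx 0

theorem IsPrimeIdeal.ann_subset_of_notMem {p : Set S} (hp : IsPrimeIdeal S p) {a : S}
    (ha : a ∉ p) : Ann S a ⊆ p := by
  intro s hs
  have mul_mul_mem (t : S) : s * t * a ∈ p := by
    have mul_mul_eq_zero : s * t * a = 0 := (isIdeal_ann a).2 s hs t
    exact mul_mul_eq_zero ▸ hp.1.zero_mem
  exact (hp.2 s a mul_mul_mem).resolve_right ha

end

/-- If `p = Ann x` and `q = Ann y` are two distinct prime ideals of
`S`, then `x · y = 0`. -/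
theorem mul_eq_zero_of_distinct_associated_primes (x y : S)
    (hp : IsPrimeIdeal S (Ann S x)) (hq : IsPrimeIdeal S (Ann S y))
    (hne : Ann S x ≠ Ann S y) :
    x * y = 0 := by
  by_contra hxy
  have hyx : y * x ≠ 0 := by rwa [CommSemigroupWithZero.mul_comm]
  have hxy_subset : Ann S x ⊆ Ann S y := hq.ann_subset_of_notMem hxy
  have hyx_subset : Ann S y ⊆ Ann S x := hp.ann_subset_of_notMem hyx
  exact hne (hxy_subset.antisymm hyx_subset)
end

section
/- Let S be a reduced commutative semigroup with zero. If Γ(S) is bipartite (its vertex set can be partitioned into two nonempty parts such that no edge joins two vertices of the same part), then Γ(S) is a complete bipartite graph. -/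
variable (S : Type*) [CommSemigroupWithZero S]

/-!
In a reduced semigroup, commutative or not, swapping the factors of a zero product, or inserting a
third factor between them, again gives zero. Let `x`, `y` lie in different parts, with neighbours
`a` of `x` and `b` of `y`; each neighbour lies in the part opposite to its vertex. If `x * y ≠ 0`,
then `x * y` is a vertex annihilated both by `a` and by `b`, that is, by an element of either part,
so it fits in neither part.
-/

/-- Reducedness of a semigroup with zero: no nonzero element squares to zero. If `x ^ n = 0` with
`n ≥ 2`, then `x ^ (n - 1)` squares to zero, so this already excludes all nonzero nilpotents, and no
powers are needed to state it. -/
def IsReducedSemigroup (R : Type*) [SemigroupWithZero R] : Prop :=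
  ∀ x : R, x * x = 0 → x = 0

section SemigroupWithZero

variable {R : Type*} [SemigroupWithZero R]

namespace IsReducedSemigroup

theorem mul_eq_zero_symm (hR : IsReducedSemigroup R) {x y : R} (hxy : x * y = 0) : y * x = 0 :=
  hR _ <| calc
    y * x * (y * x) = y * (x * y) * x := by simp only [mul_assoc]
    _ = 0 := by rw [hxy, mul_zero, zero_mul]

theorem mul_mul_eq_zero (hR : IsReducedSemigroup R) {x y : R} (hxy : x * y = 0) (z : R) :
    x * z * y = 0 :=
  hR _ <| calc
    x * z * y * (x * z * y) = x * z * (y * x) * (z * y) := by simp only [mul_assoc]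
    _ = 0 := by rw [hR.mul_eq_zero_symm hxy, mul_zero, zero_mul]

theorem mul_ne_zero_of_pairwise (hR : IsReducedSemigroup R) {V : Set R}
    (hV : V.Pairwise fun x y => x * y ≠ 0) {x y : R} (hx : x ∈ V) (hy : y ∈ V) (hy₀ : y ≠ 0) :
    x * y ≠ 0 := by
  obtain rfl | hne := eq_or_ne x y
  · exact fun hxx => hy₀ (hR x hxx)
  · exact hV hx hy hne

theorem mem_right_of_mul_eq_zero (hR : IsReducedSemigroup R) {V W : Set R}
    (hcover : V ∪ W = {x | x ≠ 0 ∧ ∃ y, y ≠ 0 ∧ x * y = 0})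
    (hV : V.Pairwise fun x y => x * y ≠ 0) {x a : R} (hx : x ∈ V) (ha : a ≠ 0)
    (hxa : x * a = 0) : a ∈ W := by
  have hx₀ : x ≠ 0 := (hcover.subset (Or.inl hx)).1
  have ha_mem : a ∈ V ∪ W := hcover.superset ⟨ha, x, hx₀, hR.mul_eq_zero_symm hxa⟩
  exact ha_mem.resolve_left fun haV => hR.mul_ne_zero_of_pairwise hV hx haV ha hxa

end IsReducedSemigroup

theorem bipartite_implies_complete_bipartite_general (hR : IsReducedSemigroup R) {V₁ V₂ : Set R}
    (hcover : V₁ ∪ V₂ = {x | x ≠ 0 ∧ ∃ y, y ≠ 0 ∧ x * y = 0})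
    (hV₁ : V₁.Pairwise fun x y => x * y ≠ 0) (hV₂ : V₂.Pairwise fun x y => x * y ≠ 0)
    {x y : R} (hx : x ∈ V₁) (hy : y ∈ V₂) : x * y = 0 := by
  obtain ⟨-, a, ha, hxa⟩ := hcover.subset (Or.inl hx)
  obtain ⟨-, b, hb, hyb⟩ := hcover.subset (Or.inr hy)
  have haV₂ : a ∈ V₂ := hR.mem_right_of_mul_eq_zero hcover hV₁ hx ha hxa
  have hbV₁ : b ∈ V₁ :=
    hR.mem_right_of_mul_eq_zero ((Set.union_comm V₂ V₁).trans hcover) hV₂ hy hb hyb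
  have hxya : x * y * a = 0 := hR.mul_mul_eq_zero hxa y
  have hxyb : x * y * b = 0 := by rw [mul_assoc, hyb, mul_zero]
  by_contra hxy
  rcases hcover.superset ⟨hxy, a, ha, hxya⟩ with hxyV₁ | hxyV₂
  · exact hR.mul_ne_zero_of_pairwise hV₁ hxyV₁ hbV₁ hb hxyb
  · exact hR.mul_ne_zero_of_pairwise hV₂ hxyV₂ haV₂ ha hxya

end SemigroupWithZero

/-- If `S` is reduced and `Γ(S)` is bipartite (its vertex set is the
disjoint union of two nonempty parts with no edge inside a part), then `Γ(S)` is a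
complete bipartite graph: any two vertices in different parts are adjacent. -/
theorem bipartite_implies_complete_bipartite
    (hred : ∀ x : S, IsNil S x → x = 0)
    (V₁ V₂ : Set S) (h1 : V₁.Nonempty) (h2 : V₂.Nonempty)
    (hdisj : Disjoint V₁ V₂) (hcover : V₁ ∪ V₂ = zdVerts S)
    (hpart : ∀ x y : S, ((x ∈ V₁ ∧ y ∈ V₁) ∨ (x ∈ V₂ ∧ y ∈ V₂)) → x ≠ y → x * y ≠ 0) :
    ∀ x ∈ V₁, ∀ y ∈ V₂, x * y = 0 := by
  intro x hx y hy
  exact bipartite_implies_complete_bipartite_general (fun x hxx => hred x ⟨1, hxx⟩) hcover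
    (fun x hx y hy => hpart x y (Or.inl ⟨hx, hy⟩)) (fun x hx y hy => hpart x y (Or.inr ⟨hx, hy⟩))
    hx hy
end
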